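/- Let d ≥ 1 and let a be a real number with a > d − 1. Parametrize d×d Hermitian complex matrices by their real diagonal entries x ∈ ℝ^d and their strictly upper-triangular entries z ∈ ℂ^{d(d−1)/2}, writing H(x,z) for the Hermitian matrix with H_{pp} = x_p and H_{pq} = z_{pq}, H_{qp} = conj(z_{pq}) for p < q. Then ∫ over the set {(x,z) : H(x,z) is positive definite} of det(H(x,z))^{a−1} · e^{−trace(H(x,z))} with respect to Lebesgue measure on ℝ^d × ℂ^{d(d−1)/2} ≅ ℝ^{d²} equals π^{d(d−1)/2} · Π_{i=1}^d Γ(a + d − i), where det(H) and trace(H) are real and positive on positive definite Hermitian matrices. -/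

import Mathlib

open Finset Matrix MeasureTheory ComplexOrder

/-- The Hermitian matrix with diagonal `x` and above-diagonal entries `z`. -/
noncomputable def Hmat19 (d : ℕ) (x : Fin d → ℝ)
    (z : {pq : Fin d × Fin d // pq.1 < pq.2} → ℂ) : Matrix (Fin d) (Fin d) ℂ :=
  Matrix.of fun p q =>
    if h : p < q then z ⟨(p, q), h⟩
    else if h' : q < p then star (z ⟨(q, p), h'⟩)
    else (x p : ℂ)

/-!
Write a positive definite matrix of size `d + 1` in block form with corner `t > 0`, first row
`(t, w)` and lower block `S + wᴴ w / t`, so that `S` is the Schur complement of `t`. The matrix is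
positive definite iff `t > 0` and `S` is, its determinant is `t · det S`, its trace is
`t + ‖w‖² / t + tr S`, and `(t, w, S) ↦ H` preserves Lebesgue measure, being a shear. Hence the
integral for `d + 1` is the integral for `d` times
`∫ t^(a-1) e^(-t) ∫ e^(-‖w‖²/t) dw dt = ∫ t^(a-1) e^(-t) (π t)^d dt = π^d Γ(a + d)`.
-/

section PosDef

variable {m n 𝕜 : Type*} [RCLike 𝕜]

lemma posDef_submatrix_equiv_iff {A : Matrix n n 𝕜} (e : m ≃ n) :
    (A.submatrix e e).PosDef ↔ A.PosDef :=
  ⟨fun h => by simpa using h.submatrix e.symm.injective, fun h => h.submatrix e.injective⟩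

lemma isClosed_setOf_posSemidef [Finite n] :
    IsClosed {A : Matrix n n 𝕜 | A.PosSemidef} := by
  have := Fintype.ofFinite n
  simp only [posSemidef_iff_dotProduct_mulVec, Set.ofPred_and, Set.ofPred_forall]
  refine IsClosed.inter (isClosed_eq continuous_id.matrix_conjTranspose continuous_id) ?_
  exact isClosed_iInter fun v => isClosed_le continuous_const
    (continuous_const.dotProduct (continuous_id.matrix_mulVec continuous_const))

lemma posDef_iff_posSemidef_and_det_ne_zero [Fintype n] [DecidableEq n] {A : Matrix n n 𝕜} :
    A.PosDef ↔ A.PosSemidef ∧ A.det ≠ 0 :=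
  ⟨fun h => ⟨h.posSemidef, h.posSemidef.posDef_iff_det_ne_zero.1 h⟩,
    fun h => h.1.posDef_iff_det_ne_zero.2 h.2⟩

lemma det_fromBlocks_add_schur {R : Type*} [CommRing R] [Fintype m] [DecidableEq m] [Fintype n]
    [DecidableEq n] {A : Matrix m m R} (hA : IsUnit A.det) (B : Matrix m n R) (C : Matrix n m R)
    (S : Matrix n n R) :
    (fromBlocks A B C (S + C * A⁻¹ * B)).det = A.det * S.det := by
  let _ := invertibleOfIsUnitDet A hA
  rw [det_fromBlocks₁₁, invOf_eq_nonsing_inv, add_sub_cancel_right]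

lemma posDef_fromBlocks_add_schur_iff [Fintype m] [DecidableEq m] [Finite n]
    {A : Matrix m m 𝕜} (hA : A.PosDef) (B : Matrix m n 𝕜) (S : Matrix n n 𝕜) :
    (fromBlocks A B Bᴴ (S + Bᴴ * A⁻¹ * B)).PosDef ↔ S.PosDef := by
  classical
  have := Fintype.ofFinite n
  let _ := hA.isUnit.invertible
  have hdet : A.det ≠ 0 := (posDef_iff_posSemidef_and_det_ne_zero.1 hA).2
  rw [posDef_iff_posSemidef_and_det_ne_zero, posDef_iff_posSemidef_and_det_ne_zero,
    hA.fromBlocks₁₁, add_sub_cancel_right, det_fromBlocks_add_schur hdet.isUnit,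
    mul_ne_zero_iff_left hdet]

lemma measurableSet_setOf_posDef [Finite n] {X : Type*} [TopologicalSpace X]
    [MeasurableSpace X] [OpensMeasurableSpace X] {f : X → Matrix n n 𝕜} (hf : Continuous f) :
    MeasurableSet {x | (f x).PosDef} := by
  classical
  have := Fintype.ofFinite n
  simp only [posDef_iff_posSemidef_and_det_ne_zero]
  exact (isClosed_setOf_posSemidef.preimage hf).measurableSet.inter
    (isOpen_ne_fun hf.matrix_det continuous_const).measurableSet

end PosDef

section GammaGaussian

variable {ι : Type*} [Fintype ι]

lemma integral_exp_neg_mul_sum_norm_sq {b : ℝ} (hb : 0 < b) :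
    ∫ w : ι → ℂ, Real.exp (-b * ∑ i, ‖w i‖ ^ 2) = (Real.pi / b) ^ Fintype.card ι := by
  have hC : ∫ z : ℂ, Real.exp (-b * ‖z‖ ^ 2) = Real.pi / b := by
    simpa [Complex.finrank_real_complex] using
      GaussianFourier.integral_rexp_neg_mul_sq_norm (V := ℂ) hb
  simp only [mul_sum, Real.exp_sum]
  rw [integral_fintype_prod_volume_eq_pow (fun z : ℂ => Real.exp (-b * ‖z‖ ^ 2)), hC]

lemma integral_rpow_mul_exp_neg_mul_pow (n : ℕ) (c : ℝ) {a : ℝ} (ha : 0 < a + n) :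
    ∫ t in Set.Ioi (0 : ℝ), t ^ (a - 1) * Real.exp (-t) * (c * t) ^ n
      = c ^ n * Real.Gamma (a + n) := by
  rw [Real.Gamma_eq_integral ha, ← integral_const_mul]
  refine setIntegral_congr_fun measurableSet_Ioi fun t (ht : 0 < t) => ?_
  rw [add_sub_right_comm, Real.rpow_add ht, Real.rpow_natCast]
  ring

/-- The factor of the matrix gamma density contributed by a pivot `t` and the rest `w` of its
row, as a function of `p = (t, w)`. It is only integrated over `t > 0`. -/
noncomputable def gammaGaussian (a : ℝ) (p : ℝ × (ι → ℂ)) : ℝ :=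
  p.1 ^ (a - 1) * Real.exp (-p.1) * Real.exp (-p.1⁻¹ * ∑ i, ‖p.2 i‖ ^ 2)

lemma integral_gammaGaussian_right (a : ℝ) {t : ℝ} (ht : 0 < t) :
    ∫ w : ι → ℂ, gammaGaussian a (t, w)
      = t ^ (a - 1) * Real.exp (-t) * (Real.pi * t) ^ Fintype.card ι := by
  simp only [gammaGaussian]
  rw [integral_const_mul, integral_exp_neg_mul_sum_norm_sq (inv_pos.2 ht), div_inv_eq_mul]

lemma integrableOn_gammaGaussian {a : ℝ} (ha : 0 < a + Fintype.card ι) :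
    IntegrableOn (gammaGaussian (ι := ι) a) (Set.Ioi 0 ×ˢ Set.univ) := by
  have hmeas : Measurable (gammaGaussian (ι := ι) a) := by unfold gammaGaussian; fun_prop
  rw [IntegrableOn, Measure.volume_eq_prod, ← Measure.prod_restrict, Measure.restrict_univ,
    integrable_prod_iff hmeas.aestronglyMeasurable]
  have hright : ∀ᵐ t : ℝ ∂volume.restrict (Set.Ioi 0), ∫ w : ι → ℂ, ‖gammaGaussian a (t, w)‖
      = t ^ (a - 1) * Real.exp (-t) * (Real.pi * t) ^ Fintype.card ι := by
    filter_upwards [ae_restrict_mem measurableSet_Ioi] with t (ht : 0 < t)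
    rw [← integral_gammaGaussian_right a ht]
    refine integral_congr_ae (.of_forall fun w => Real.norm_of_nonneg ?_)
    unfold gammaGaussian
    positivity
  constructor
  · filter_upwards [ae_restrict_mem measurableSet_Ioi] with t (ht : 0 < t)
    refine .of_integral_ne_zero ?_
    rw [integral_gammaGaussian_right a ht]
    positivity
  · refine .congr (.of_integral_ne_zero ?_) (hright.mono fun _ h => h.symm)
    rw [integral_rpow_mul_exp_neg_mul_pow _ _ ha]
    have := Real.Gamma_pos_of_pos ha
    positivity

lemma setIntegral_gammaGaussian {a : ℝ} (ha : 0 < a + Fintype.card ι) :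
    ∫ p in Set.Ioi 0 ×ˢ Set.univ, gammaGaussian (ι := ι) a p
      = Real.pi ^ Fintype.card ι * Real.Gamma (a + Fintype.card ι) := by
  rw [Measure.volume_eq_prod, setIntegral_prod _ (integrableOn_gammaGaussian ha),
    ← integral_rpow_mul_exp_neg_mul_pow _ _ ha]
  refine setIntegral_congr_fun measurableSet_Ioi fun t (ht : 0 < t) => ?_
  simpa only [Measure.restrict_univ] using integral_gammaGaussian_right a ht

end GammaGaussian

lemma measurePreserving_prodProdProdComm {α β γ δ : Type*} [MeasurableSpace α]
    [MeasurableSpace β] [MeasurableSpace γ] [MeasurableSpace δ] (μ : Measure α) (ν : Measure β)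
    (ρ : Measure γ) (σ : Measure δ) [SFinite μ] [SFinite ν] [SFinite ρ] [SFinite σ] :
    MeasurePreserving (Equiv.prodProdProdComm α β γ δ) ((μ.prod ν).prod (ρ.prod σ))
      ((μ.prod ρ).prod (ν.prod σ)) := by
  have hmid : MeasurePreserving (fun q : β × γ × δ => (q.2.1, q.1, q.2.2))
      (ν.prod (ρ.prod σ)) (ρ.prod (ν.prod σ)) :=
    (measurePreserving_prodAssoc ρ ν σ).comp
      ((Measure.measurePreserving_swap.prod (.id σ)).comp (measurePreserving_prodAssoc ν ρ σ).symm)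
  exact (measurePreserving_prodAssoc μ ρ (ν.prod σ)).symm.comp
    (((MeasurePreserving.id μ).prod hmid).comp (measurePreserving_prodAssoc μ ν (ρ.prod σ)))

lemma measurePreserving_prod_add_right_comp {α G : Type*} [MeasurableSpace α] [MeasurableSpace G]
    [AddGroup G] [MeasurableAdd₂ G] (μ : Measure α) (ν : Measure G) [SFinite μ] [SFinite ν]
    [ν.IsAddRightInvariant] {v : α → G} (hv : Measurable v) :
    MeasurePreserving (fun p : α × G => (p.1, p.2 + v p.1)) (μ.prod ν) (μ.prod ν) :=
  (MeasurePreserving.id μ).skew_product (g := fun p y => y + v p)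
    (measurable_snd.add (hv.comp measurable_fst))
    (.of_forall fun p => map_add_right_eq_self ν (v p))

/-- Index pairs strictly above the diagonal. -/
abbrev UpperIndex (d : ℕ) : Type := {pq : Fin d × Fin d // pq.1 < pq.2}

/-- Real coordinates of Hermitian `d × d` matrices: the diagonal and the strictly upper part. -/
abbrev HermCoord (d : ℕ) : Type := (Fin d → ℝ) × (UpperIndex d → ℂ)

/-- Splits an index pair of size `d + 1` according to whether it lies in the first row. -/
noncomputable def upperIndexSuccEquiv (d : ℕ) : Fin d ⊕ UpperIndex d ≃ UpperIndex (d + 1) :=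
  .ofBijective
    (Sum.elim (fun j => ⟨(0, j.succ), Fin.succ_pos j⟩)
      fun pq => ⟨(pq.1.1.succ, pq.1.2.succ), Fin.succ_lt_succ_iff.2 pq.2⟩) <| by
    constructor
    · rintro (i | ⟨⟨i, j⟩, h⟩) (k | ⟨⟨k, l⟩, h'⟩) <;>
        simp [Fin.succ_ne_zero, (Fin.succ_ne_zero _).symm]
    · rintro ⟨⟨p, q⟩, h⟩
      obtain ⟨q, rfl⟩ := Fin.exists_succ_eq.2 (Fin.ne_zero_of_lt h)
      cases p using Fin.cases with
      | zero => exact ⟨.inl q, rfl⟩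
      | succ p => exact ⟨.inr ⟨(p, q), Fin.succ_lt_succ_iff.1 h⟩, rfl⟩

/-- Assembles a strictly upper triangular array from its first row and the remaining entries. -/
noncomputable def consUpper (α : Type*) [MeasurableSpace α] (d : ℕ) :
    (Fin d → α) × (UpperIndex d → α) ≃ᵐ (UpperIndex (d + 1) → α) :=
  (MeasurableEquiv.sumPiEquivProdPi fun _ => α).symm.trans
    (MeasurableEquiv.piCongrLeft (fun _ => α) (upperIndexSuccEquiv d))

lemma measurePreserving_consUpper (α : Type*) [MeasureSpace α]
    [SigmaFinite (volume : Measure α)] (d : ℕ) : MeasurePreserving (consUpper α d) :=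
  (volume_measurePreserving_sumPiEquivProdPi_symm _).trans
    (volume_measurePreserving_piCongrLeft _ _)

section ConsUpper

variable {α : Type*} [MeasurableSpace α] {d : ℕ}

@[simp]
lemma consUpper_zero_succ (wz : (Fin d → α) × (UpperIndex d → α)) (j : Fin d)
    (h : 0 < j.succ) : consUpper α d wz ⟨(0, j.succ), h⟩ = wz.1 j :=
  Equiv.piCongrLeft_apply_apply (fun _ => α) (upperIndexSuccEquiv d) _ (.inl j)

@[simp]
lemma consUpper_succ_succ (wz : (Fin d → α) × (UpperIndex d → α)) (i j : Fin d)
    (h : i.succ < j.succ) :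
    consUpper α d wz ⟨(i.succ, j.succ), h⟩ = wz.2 ⟨(i, j), Fin.succ_lt_succ_iff.1 h⟩ :=
  Equiv.piCongrLeft_apply_apply (fun _ => α) (upperIndexSuccEquiv d) _ (.inr ⟨(i, j), _⟩)

end ConsUpper

lemma measurePreserving_finCons (α : Type*) [MeasureSpace α] [SigmaFinite (volume : Measure α)]
    (d : ℕ) :
    MeasurePreserving fun tx : α × (Fin d → α) => (Fin.cons tx.1 tx.2 : Fin (d + 1) → α) := by
  convert! (volume_preserving_piFinSuccAbove (fun _ : Fin (d + 1) => α) 0).symm using 1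
  funext tx
  simp [MeasurableEquiv.piFinSuccAbove_symm_apply, Fin.insertNthEquiv]

namespace HermCoord

variable {d : ℕ}

/-- The Hermitian matrix with the given coordinates. -/
noncomputable def toMatrix (y : HermCoord d) : Matrix (Fin d) (Fin d) ℂ := Hmat19 d y.1 y.2

/-- The coordinates of positive definite matrices. -/
def posDefCone (d : ℕ) : Set (HermCoord d) := {y | y.toMatrix.PosDef}

/-- Coordinates of the rank one matrix `wᴴ w / t`, for a row vector `w`. -/
noncomputable def rankOne (t : ℝ) (w : Fin d → ℂ) : HermCoord d :=
  (fun i => ‖w i‖ ^ 2 / t, fun pq => star (w pq.1.1) * w pq.1.2 / t)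

/-- For `p = ((t, w), y)`, the coordinates of the matrix of size `d + 1` with first row `(t, w)`
whose Schur complement with respect to the corner `t` has coordinates `y`. -/
noncomputable def ofSchur (p : (ℝ × (Fin d → ℂ)) × HermCoord d) : HermCoord (d + 1) :=
  (Fin.cons p.1.1 (p.2 + rankOne p.1.1 p.1.2).1,
    consUpper ℂ d (p.1.2, (p.2 + rankOne p.1.1 p.1.2).2))

lemma continuous_toMatrix : Continuous (toMatrix (d := d)) := by
  refine continuous_matrix fun p q => ?_
  simp only [toMatrix, Hmat19, Matrix.of_apply]
  split_ifs <;> fun_prop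

lemma measurableSet_posDefCone (d : ℕ) : MeasurableSet (posDefCone d) :=
  measurableSet_setOf_posDef continuous_toMatrix

lemma measurable_rankOne : Measurable fun p : ℝ × (Fin d → ℂ) => rankOne p.1 p.2 := by
  refine .prodMk (measurable_pi_lambda _ fun i => ?_) (measurable_pi_lambda _ fun pq => ?_) <;>
    fun_prop

lemma measurePreserving_ofSchur : MeasurePreserving (ofSchur (d := d)) := by
  have : (volume : Measure (HermCoord d)).IsAddRightInvariant :=
    Measure.prod.instIsAddRightInvariant
  exact ((measurePreserving_finCons ℝ d).prod (measurePreserving_consUpper ℂ d)).comp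
    ((measurePreserving_prodProdProdComm _ _ _ _).comp
      (measurePreserving_prod_add_right_comp volume volume measurable_rankOne))

/-- Splits off the first row and column index, so that a matrix of size `d + 1` can be viewed as a
block matrix with a scalar corner. -/
def blockEquiv (d : ℕ) : Unit ⊕ Fin d ≃ Fin (d + 1) :=
  (Equiv.sumComm _ _).trans ((Equiv.optionEquivSumPUnit _).symm.trans (finSuccEquiv d).symm)

@[simp]
lemma blockEquiv_inl (u : Unit) : blockEquiv d (.inl u) = 0 := by
  simp [blockEquiv]

@[simp]
lemma blockEquiv_inr (i : Fin d) : blockEquiv d (.inr i) = i.succ := by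
  simp [blockEquiv]

lemma toMatrix_add (y y' : HermCoord d) : (y + y').toMatrix = y.toMatrix + y'.toMatrix := by
  ext i j
  simp only [toMatrix, Hmat19, of_apply, Matrix.add_apply]
  split_ifs <;> simp

lemma toMatrix_rankOne (t : ℝ) (w : Fin d → ℂ) :
    (rankOne t w).toMatrix
      = (replicateRow Unit w)ᴴ * (diagonal fun _ : Unit => (t : ℂ))⁻¹ * replicateRow Unit w := by
  ext i j
  have hentry : ((replicateRow Unit w)ᴴ * (diagonal fun _ : Unit => (t : ℂ))⁻¹
      * replicateRow Unit w) i j = star (w i) * w j / t := by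
    simp [Matrix.mul_apply, Ring.inverse_eq_inv', div_eq_mul_inv, mul_right_comm]
  rw [hentry]
  rcases lt_trichotomy i j with h | rfl | h
  · simp [toMatrix, Hmat19, rankOne, h]
  · simp [toMatrix, Hmat19, rankOne, Complex.conj_mul']
  · simp [toMatrix, Hmat19, rankOne, h, not_lt_of_gt h, mul_comm]

lemma toMatrix_ofSchur (t : ℝ) (w : Fin d → ℂ) (y : HermCoord d) :
    (ofSchur ((t, w), y)).toMatrix.submatrix (blockEquiv d) (blockEquiv d)
      = fromBlocks (diagonal fun _ : Unit => (t : ℂ)) (replicateRow Unit w)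
          (replicateRow Unit w)ᴴ (y.toMatrix + (replicateRow Unit w)ᴴ
            * (diagonal fun _ : Unit => (t : ℂ))⁻¹ * replicateRow Unit w) := by
  rw [← toMatrix_rankOne, ← toMatrix_add]
  ext (i | i) (j | j) <;> simp [toMatrix, Hmat19, ofSchur]

lemma det_toMatrix_ofSchur {t : ℝ} (ht : t ≠ 0) (w : Fin d → ℂ) (y : HermCoord d) :
    (ofSchur ((t, w), y)).toMatrix.det = t * y.toMatrix.det := by
  rw [← det_submatrix_equiv_self (blockEquiv d), toMatrix_ofSchur,
    det_fromBlocks_add_schur (by simpa using ht)]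
  simp

lemma re_trace_toMatrix (y : HermCoord d) : y.toMatrix.trace.re = ∑ i, y.1 i := by
  simp [Matrix.trace, toMatrix, Hmat19]

lemma re_trace_toMatrix_ofSchur (t : ℝ) (w : Fin d → ℂ) (y : HermCoord d) :
    (ofSchur ((t, w), y)).toMatrix.trace.re
      = t + t⁻¹ * ∑ i, ‖w i‖ ^ 2 + y.toMatrix.trace.re := by
  simp only [re_trace_toMatrix, ofSchur, rankOne, Fin.sum_univ_succ, Fin.cons_zero, Fin.cons_succ,
    Prod.fst_add, Pi.add_apply, sum_add_distrib, ← sum_div]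
  ring

lemma ofSchur_mem_posDefCone_iff {t : ℝ} {w : Fin d → ℂ} {y : HermCoord d} :
    ofSchur ((t, w), y) ∈ posDefCone (d + 1) ↔ 0 < t ∧ y ∈ posDefCone d := by
  by_cases ht : 0 < t
  · have hD : (diagonal fun _ : Unit => (t : ℂ)).PosDef :=
      posDef_diagonal_iff.2 fun _ => by simpa using ht
    simp only [posDefCone, Set.mem_ofPred_eq, ht, true_and]
    rw [← posDef_submatrix_equiv_iff (blockEquiv d), toMatrix_ofSchur,
      posDef_fromBlocks_add_schur_iff hD]
  · refine iff_of_false (fun h => ht ?_) fun h => ht h.1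
    simpa [toMatrix, Hmat19, ofSchur] using PosDef.diag_pos h (i := 0)

lemma setIntegral_posDefCone_succ {E : Type*} [NormedAddCommGroup E] [NormedSpace ℝ E]
    {f : HermCoord (d + 1) → E} (hf : AEStronglyMeasurable f) :
    ∫ y in posDefCone (d + 1), f y
      = ∫ p in (Set.Ioi 0 ×ˢ Set.univ) ×ˢ posDefCone d, f (ofSchur p) := by
  have hpre : ofSchur ⁻¹' posDefCone (d + 1)
      = (Set.Ioi (0 : ℝ) ×ˢ (Set.univ : Set (Fin d → ℂ))) ×ˢ posDefCone d := by
    ext ⟨⟨t, w⟩, y⟩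
    simp [ofSchur_mem_posDefCone_iff]
  have hmp := measurePreserving_ofSchur (d := d)
  rw [← hmp.map_eq] at hf ⊢
  rw [setIntegral_map (measurableSet_posDefCone _) hf hmp.aemeasurable, hpre]

/-- The density `det(H)^(a-1) e^{-tr H}` of the matrix gamma function. The real parts lose nothing,
as the determinant and the trace of a Hermitian matrix are real. -/
noncomputable def gammaDensity (a : ℝ) (y : HermCoord d) : ℝ :=
  y.toMatrix.det.re ^ (a - 1) * Real.exp (-y.toMatrix.trace.re)

lemma measurable_gammaDensity (a : ℝ) : Measurable (gammaDensity (d := d) a) := by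
  have hdet := (Complex.continuous_re.comp (continuous_toMatrix (d := d)).matrix_det).measurable
  have htr := (Complex.continuous_re.comp (continuous_toMatrix (d := d)).matrix_trace).measurable
  exact (hdet.pow_const _).mul htr.neg.exp

lemma gammaDensity_ofSchur (a : ℝ) {t : ℝ} (ht : 0 < t) (w : Fin d → ℂ) {y : HermCoord d}
    (hy : y ∈ posDefCone d) :
    gammaDensity a (ofSchur ((t, w), y)) = gammaGaussian a (t, w) * gammaDensity a y := by
  have hdet : 0 ≤ y.toMatrix.det.re :=
    (Complex.le_def.1 (PosDef.posSemidef hy).det_nonneg).1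
  simp only [gammaDensity, gammaGaussian]
  rw [det_toMatrix_ofSchur ht.ne', re_trace_toMatrix_ofSchur, Complex.re_ofReal_mul,
    Real.mul_rpow ht.le hdet, neg_add, neg_add, Real.exp_add, Real.exp_add, ← neg_mul]
  ring

lemma setIntegral_gammaDensity_zero (a : ℝ) :
    ∫ y in posDefCone 0, gammaDensity a y = 1 := by
  have : posDefCone 0 = Set.univ :=
    Set.eq_univ_of_forall fun y => by
      rw [posDefCone, Set.mem_ofPred_eq, Subsingleton.elim y.toMatrix 1]
      exact .one
  have : IsEmpty (UpperIndex 0) := ⟨fun pq => pq.1.1.elim0⟩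
  simp [*, gammaDensity, Measure.volume_eq_prod, Measure.real, ← Set.univ_prod_univ,
    Measure.prod_prod, volume_pi]

lemma setIntegral_gammaDensity_succ {a : ℝ} (ha : 0 < a + d) :
    ∫ y in posDefCone (d + 1), gammaDensity a y
      = Real.pi ^ d * Real.Gamma (a + d) * ∫ y in posDefCone d, gammaDensity a y := by
  have hfactor : ∀ p ∈ (Set.Ioi 0 ×ˢ Set.univ) ×ˢ posDefCone d,
      gammaDensity a (ofSchur p) = gammaGaussian a p.1 * gammaDensity a p.2 :=
    fun _ hp => gammaDensity_ofSchur a hp.1.1 _ hp.2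
  have hpivot := setIntegral_gammaGaussian (ι := Fin d) (a := a) (by simpa using ha)
  rw [Fintype.card_fin] at hpivot
  rw [setIntegral_posDefCone_succ (measurable_gammaDensity a).aestronglyMeasurable,
    setIntegral_congr_fun ((measurableSet_Ioi.prod .univ).prod (measurableSet_posDefCone d))
      hfactor, Measure.volume_eq_prod, setIntegral_prod_mul, hpivot]

end HermCoord

open HermCoord in
theorem stmt_19_general (d : ℕ) (a : ℝ) (ha : 0 < a) :
    ∫ xz in {xz : (Fin d → ℝ) × ({pq : Fin d × Fin d // pq.1 < pq.2} → ℂ) |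
        (Hmat19 d xz.1 xz.2).PosDef},
      (Hmat19 d xz.1 xz.2).det.re ^ (a - 1)
        * Real.exp (-(Hmat19 d xz.1 xz.2).trace.re)
      = Real.pi ^ (d * (d - 1) / 2)
        * ∏ i : Fin d, Real.Gamma (a + d - ((i : ℕ) + 1)) := by
  change ∫ y in posDefCone d, gammaDensity a y = _
  induction d with
  | zero => simpa using setIntegral_gammaDensity_zero a
  | succ d ih =>
    have hfirst : a + (d + 1 : ℕ) - (((0 : Fin (d + 1)) : ℕ) + 1) = a + d := by
      push_cast [Fin.val_zero]
      ring
    have hrest (i : Fin d) : a + (d + 1 : ℕ) - ((i.succ : ℕ) + 1) = a + d - ((i : ℕ) + 1) := by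
      push_cast [Fin.val_succ]
      ring
    rw [setIntegral_gammaDensity_succ (by positivity), ih, Nat.triangle_succ, pow_add,
      Fin.prod_univ_succ, hfirst]
    simp only [hrest]
    ring

/-- The complex matrix gamma function identity:
`∫_{H > 0} det(H)^{a-1} e^{-trace H} dH = π^{d(d-1)/2} Π_{i=1}^d Γ(a + d - i)`,
where the integral is over positive definite Hermitian matrices parametrized by their
real diagonal and strictly upper-triangular entries. -/
theorem stmt_19 (d : ℕ) (hd : 1 ≤ d) (a : ℝ) (ha : (d : ℝ) - 1 < a) :
    ∫ xz in {xz : (Fin d → ℝ) × ({pq : Fin d × Fin d // pq.1 < pq.2} → ℂ) |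
        (Hmat19 d xz.1 xz.2).PosDef},
      (Hmat19 d xz.1 xz.2).det.re ^ (a - 1)
        * Real.exp (-(Hmat19 d xz.1 xz.2).trace.re)
      = Real.pi ^ (d * (d - 1) / 2)
        * ∏ i : Fin d, Real.Gamma (a + d - ((i : ℕ) + 1)) :=
  stmt_19_general d a ((sub_nonneg.2 (Nat.one_le_cast.2 hd)).trans_lt ha)
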